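/- Let Ω ⊊ ℂ be an exceptional domain with classical roof function u. Then ∂Ω is locally real-analytic: for every z₀ ∈ ∂Ω there exist an open neighborhood U ⊆ ℂ of z₀ and a real-analytic function ψ : U → ℝ whose gradient does not vanish at any point of U, such that ∂Ω ∩ U = {z ∈ U : ψ(z) = 0}. -/

import Mathlib

/-!
Let `f = ∂u/∂x - i ∂u/∂y`, which is holomorphic on `Ω`, continuous on `closure Ω` and unimodular on
`∂Ω`. Near a boundary point `z₀`, `f` is close to the unit number `α = f z₀`, so `u` increases in
all directions of a fixed cone around `conj α`. Hence `Ω` is locally stable under this cone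
(`LocalRoof.coneAt_subset`), that is, it is the region above a Lipschitz graph.

Primitives of `f` on the cones with vertices in `Ω` glue to a holomorphic `F` with `Re F = u`, and
`F - α z` has a small Lipschitz constant because two points of `Ω` are joined by a third one in the
cones above both (`LocalRoof.exists_completion`). So `F` extends to a homeomorphism `Φ` of the plane,
which by connectedness of the half-disc takes `Ω` to the right half-plane and `∂Ω` to the imaginary
axis near `z₀` (`LocalRoof.exists_ball`).

On the right half-disc `(Φ⁻¹)' = 1 / (f ∘ Φ⁻¹)`, and this is unimodular on the diameter. By Schwarz
reflection, which rests on Painlevé's theorem for a line, it continues holomorphically to the disc,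
and so does `Φ⁻¹` (`LocalRoof.exists_continuation`). The continuation has nonvanishing derivative
and agrees with `Φ⁻¹` on the diameter; the real part of its local inverse is therefore the analytic
defining function of `∂Ω` (`LocalRoof.exists_defining_function`).
-/

open Metric Set

/-- The Laplacian of a real-valued function on `ℂ ≅ ℝ²`, as the sum of the second
directional derivatives in the directions `1` and `i`. -/
noncomputable def lapC (u : ℂ → ℝ) (z : ℂ) : ℝ :=
  fderiv ℝ (fun w => fderiv ℝ u w 1) z 1 +
    fderiv ℝ (fun w => fderiv ℝ u w Complex.I) z Complex.I

/-- `u` is harmonic on `s ⊆ ℂ`: twice continuously differentiable with vanishing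
Laplacian. -/
def HarmonicOnC (u : ℂ → ℝ) (s : Set ℂ) : Prop :=
  (∀ z ∈ s, ContDiffAt ℝ 2 u z) ∧ ∀ z ∈ s, lapC u z = 0

/-- `u` is a classical roof function for `Ω ⊆ ℂ`: continuous on the closure, harmonic and
positive in `Ω`, vanishing on `∂Ω`, continuously differentiable up to the boundary
(witnessed by a continuous extension `G` of the differential) with `‖∇u‖ = 1` on `∂Ω`. -/
def IsRoofFunctionC (Ω : Set ℂ) (u : ℂ → ℝ) : Prop :=
  ContinuousOn u (closure Ω) ∧
  HarmonicOnC u Ω ∧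
  (∀ z ∈ Ω, 0 < u z) ∧
  (∀ z ∈ frontier Ω, u z = 0) ∧
  ∃ G : ℂ → (ℂ →L[ℝ] ℝ),
    ContinuousOn G (closure Ω) ∧ (∀ z ∈ Ω, G z = fderiv ℝ u z) ∧
    ∀ z ∈ frontier Ω, ‖G z‖ = 1

/-! ### Painlevé's theorem for a line -/

open Complex Filter Topology Interval in
/-- Painlevé's theorem for a vertical line: continuity across the line suffices for
holomorphy. -/
lemma differentiableOn_ball_of_continuousOn_of_re_ne_zero {g : ℂ → ℂ} {c : ℂ} {ρ : ℝ}
    (hc : ContinuousOn g (ball c ρ))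
    (hd : ∀ w ∈ ball c ρ, w.re ≠ 0 → DifferentiableAt ℂ g w) :
    DifferentiableOn ℂ g (ball c ρ) := by
  refine (isConservativeOn_and_continuousOn_iff_isDifferentiableOn isOpen_ball).1 ⟨?_, hc⟩
  intro z w hzw
  rw [← add_eq_zero_iff_eq_neg, wedgeIntegral_add_wedgeIntegral_eq]
  unfold Rectangle at hzw
  by_cases h0 : (0 : ℝ) ∈ Ioo (min z.re w.re) (max z.re w.re)
  · -- The line crosses the open rectangle: split the rectangle along it.
    have h0' : (0 : ℝ) ∈ [[z.re, w.re]] := Ioo_subset_Icc_self h0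
    have hl : [[z.re, 0]] ⊆ [[z.re, w.re]] := uIcc_subset_uIcc left_mem_uIcc h0'
    have hr : [[0, w.re]] ⊆ [[z.re, w.re]] := uIcc_subset_uIcc h0' right_mem_uIcc
    have key : ∀ a b : ℂ, a.im = z.im → b.im = w.im → [[a.re, b.re]] ⊆ [[z.re, w.re]] →
        (0 : ℝ) ∉ Ioo (min a.re b.re) (max a.re b.re) →
        (∫ x : ℝ in a.re..b.re, g (x + z.im * I)) - (∫ x : ℝ in a.re..b.re, g (x + w.im * I)) +
          I • (∫ y : ℝ in z.im..w.im, g (re b + y * I)) -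
          I • (∫ y : ℝ in z.im..w.im, g (re a + y * I)) = 0 := by
      intro a b ha hb hab h
      have hsub : [[a.re, b.re]] ×ℂ [[a.im, b.im]] ⊆ ball c ρ := by
        rw [ha, hb]; exact fun x hx => hzw ⟨hab hx.1, hx.2⟩
      have := integral_boundary_rect_eq_zero_of_continuousOn_of_differentiableOn g a b
        (hc.mono hsub) (fun x hx => (hd x (hsub ⟨Ioo_subset_Icc_self hx.1,
          Ioo_subset_Icc_self hx.2⟩) (fun h' => h (h' ▸ hx.1))).differentiableWithinAt)
      rwa [ha, hb] at this
    have h1 := key z ⟨0, w.im⟩ rfl rfl hl (by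
      intro h; simp only [mem_Ioo, lt_max_iff, min_lt_iff, lt_self_iff_false, or_false] at h
      exact lt_asymm h.1 h.2)
    have h2 := key ⟨0, z.im⟩ w rfl rfl hr (by
      intro h; simp only [mem_Ioo, lt_max_iff, min_lt_iff, lt_self_iff_false, false_or] at h
      exact lt_asymm h.1 h.2)
    have hint : ∀ t ∈ [[z.im, w.im]], ∀ a b : ℝ, [[a, b]] ⊆ [[z.re, w.re]] →
        IntervalIntegrable (fun x : ℝ => g (x + t * I)) MeasureTheory.volume a b := by
      intro t ht a b hab
      refine ContinuousOn.intervalIntegrable (hc.comp (by fun_prop) ?_)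
      intro x hx
      exact hzw ⟨by simpa using hab hx, by simpa using ht⟩
    have e1 := intervalIntegral.integral_add_adjacent_intervals
      (hint z.im left_mem_uIcc _ _ hl) (hint z.im left_mem_uIcc _ _ hr)
    have e2 := intervalIntegral.integral_add_adjacent_intervals
      (hint w.im right_mem_uIcc _ _ hl) (hint w.im right_mem_uIcc _ _ hr)
    rw [← e1, ← e2]
    simp only at h1 h2
    linear_combination h1 + h2
  · exact integral_boundary_rect_eq_zero_of_continuousOn_of_differentiableOn g z w
        (hc.mono hzw) (fun x hx => (hd x (hzw ⟨Ioo_subset_Icc_self hx.1,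
          Ioo_subset_Icc_self hx.2⟩) (fun h' => h0 (h' ▸ hx.1))).differentiableWithinAt)

/-! ### The complex gradient of a harmonic function -/

/-- A `HarmonicOnC` function is harmonic in the sense of Mathlib, hence `∂u/∂x - i ∂u/∂y` is
holomorphic. -/
lemma HarmonicOnC.differentiableOn_partial {u : ℂ → ℝ} {Ω : Set ℂ} (hΩ : IsOpen Ω)
    (hu : HarmonicOnC u Ω) :
    DifferentiableOn ℂ (fun z => (fderiv ℝ u z 1 : ℂ) - Complex.I * fderiv ℝ u z Complex.I) Ω := by
  intro z hz
  have hlap : ∀ w ∈ Ω, Laplacian.laplacian u w = 0 := by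
    intro w hw
    have hd : DifferentiableAt ℝ (fderiv ℝ u) w :=
      ((hu.1 w hw).fderiv_right (m := 1) (by norm_num)).differentiableAt (by norm_num)
    have h := hu.2 w hw
    unfold lapC at h
    rw [fderiv_clm_apply hd (by fun_prop), fderiv_clm_apply hd (by fun_prop)] at h
    simpa [InnerProductSpace.laplacian_eq_iteratedFDeriv_complexPlane,
      iteratedFDeriv_two_apply] using h
  have hh : InnerProductSpace.HarmonicAt u z :=
    ⟨hu.1 z hz, Filter.eventually_of_mem (hΩ.mem_nhds hz) hlap⟩
  exact (HarmonicAt.differentiableAt_complex_partial hh).differentiableWithinAt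

/-- A real linear functional on `ℂ` is `h ↦ Re (a h)` with `a = L 1 - i L i`. -/
lemma eq_re_mul (L : ℂ →L[ℝ] ℝ) :
    L = Complex.reCLM.comp (ContinuousLinearMap.mul ℝ ℂ ((L 1 : ℂ) - Complex.I * L Complex.I)) := by
  ext h
  have e : h = h.re • (1 : ℂ) + h.im • Complex.I := by
    simp [Complex.real_smul]
  conv_lhs => rw [e]
  simp [-Complex.real_smul]
  ring

lemma norm_eq_norm_functional (L : ℂ →L[ℝ] ℝ) :
    ‖(L 1 : ℂ) - Complex.I * L Complex.I‖ = ‖L‖ := by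
  set a : ℂ := (L 1 : ℂ) - Complex.I * L Complex.I with ha
  have hL : ∀ h, L h = (a * h).re := fun h => by
    conv_lhs => rw [eq_re_mul L]
    rfl
  refine le_antisymm ?_ (L.opNorm_le_bound (norm_nonneg _) fun h => ?_)
  · rcases eq_or_ne a 0 with h0 | h0
    · rw [h0, norm_zero]; exact norm_nonneg _
    · have h1 := L.le_opNorm ((starRingEnd ℂ) a)
      rw [hL, Complex.mul_conj, Complex.ofReal_re, Complex.normSq_eq_norm_sq, RCLike.norm_conj,
        Real.norm_of_nonneg (by positivity), sq] at h1
      exact le_of_mul_le_mul_right h1 (norm_pos_iff.2 h0)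
  · rw [hL, ← norm_mul]; exact Complex.abs_re_le_norm _

/-! ### Cones -/

/-- The part in the disc `B(z₀, r)` of the open cone with vertex `z` consisting of the directions
`h` with `‖h‖ < 2 Re (α h)`. For `‖α‖ = 1` this is the cone with axis `conj α` and half-angle
`π / 3`; if `α = ∂u/∂x - i ∂u/∂y` at some point, then `conj α` is the gradient of `u` there. -/
def coneAt (α z₀ : ℂ) (r : ℝ) (z : ℂ) : Set ℂ :=
  {p | p ∈ ball z₀ r ∧ ‖p - z‖ < 2 * (α * (p - z)).re}

lemma isOpen_coneAt (α z₀ : ℂ) (r : ℝ) (z : ℂ) : IsOpen (coneAt α z₀ r z) :=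
  isOpen_ball.inter (isOpen_lt (by fun_prop)
    (continuous_const.mul (Complex.continuous_re.comp (by fun_prop))))

lemma convex_coneAt (α z₀ : ℂ) (r : ℝ) (z : ℂ) : Convex ℝ (coneAt α z₀ r z) := by
  refine (convex_ball z₀ r).inter (t := {p | ‖p - z‖ < 2 * (α * (p - z)).re})
    (convex_iff_forall_pos.2 ?_)
  intro x hx y hy a b ha hb hab
  simp only [mem_ofPred_eq] at hx hy ⊢
  have e : a • x + b • y - z = a • (x - z) + b • (y - z) := by
    have : (a : ℂ) + b = 1 := by exact_mod_cast hab
    simp only [Complex.real_smul]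
    linear_combination z * this
  rw [e]
  have h1 : ‖a • (x - z) + b • (y - z)‖ ≤ a * ‖x - z‖ + b * ‖y - z‖ := by
    refine (norm_add_le _ _).trans_eq ?_
    rw [norm_smul, norm_smul, Real.norm_of_nonneg ha.le, Real.norm_of_nonneg hb.le]
  have h2 : (α * (a • (x - z) + b • (y - z))).re
      = a * (α * (x - z)).re + b * (α * (y - z)).re := by
    simp [Complex.real_smul]; ring
  rw [h2]
  have := mul_lt_mul_of_pos_left hx ha
  have := mul_lt_mul_of_pos_left hy hb
  linarith

/-- Moving the vertex of a cone backwards along its axis enlarges the cone. -/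
lemma coneAt_shift {α z₀ z p : ℂ} {r s : ℝ} (hα : ‖α‖ = 1) (hs : 0 < s) (hp : p ∈ ball z₀ r)
    (h : ‖p - z‖ ≤ 2 * (α * (p - z)).re) :
    p ∈ coneAt α z₀ r (z - s * (starRingEnd ℂ) α) := by
  refine ⟨hp, ?_⟩
  have e : p - (z - s * (starRingEnd ℂ) α) = (p - z) + s * (starRingEnd ℂ) α := by ring
  have hn : ‖(s : ℂ) * (starRingEnd ℂ) α‖ = s := by simp [hα, abs_of_pos hs]
  have hr : (α * (s * (starRingEnd ℂ) α)).re = s := by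
    rw [mul_left_comm, Complex.mul_conj, Complex.normSq_eq_norm_sq, hα]; simp
  rw [e, mul_add, Complex.add_re, hr]
  have := norm_add_le (p - z) (s * (starRingEnd ℂ) α)
  linarith

/-! ### The shape of the domain near a boundary point -/

/-- The local data at a boundary point `z₀` of a domain `Ω` with roof function `u`:
`f = ∂u/∂x - i ∂u/∂y`, extended continuously to `closure Ω`, is unimodular on `∂Ω` and
`ε`-close to the unit number `α` on the disc `B(z₀, r)`. -/
structure LocalRoof (Ω : Set ℂ) (u : ℂ → ℝ) (f : ℂ → ℂ) (z₀ α : ℂ) (r ε : ℝ) : Prop where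
  isOpen : IsOpen Ω
  cont : ContinuousOn u (closure Ω)
  pos : ∀ z ∈ Ω, 0 < u z
  zero : ∀ z ∈ frontier Ω, u z = 0
  mem : z₀ ∈ frontier Ω
  r_pos : 0 < r
  norm_α : ‖α‖ = 1
  hasFDerivAt : ∀ z ∈ Ω,
    HasFDerivAt u (Complex.reCLM.comp (ContinuousLinearMap.mul ℝ ℂ (f z))) z
  holo : DifferentiableOn ℂ f Ω
  contf : ContinuousOn f (closure Ω)
  near : ∀ z ∈ closure Ω, z ∈ ball z₀ r → ‖f z - α‖ ≤ ε
  ε_le : ε ≤ 1 / 4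
  unit : ∀ z ∈ frontier Ω, ‖f z‖ = 1

namespace LocalRoof

variable {Ω : Set ℂ} {u : ℂ → ℝ} {f : ℂ → ℂ} {z₀ α : ℂ} {r ε : ℝ}

lemma mem_of_pos (H : LocalRoof Ω u f z₀ α r ε) {z : ℂ} (hz : z ∈ closure Ω) (h : 0 < u z) :
    z ∈ Ω := by
  by_contra hn
  have : z ∈ frontier Ω := ⟨hz, by rwa [H.isOpen.interior_eq]⟩
  exact h.ne' (H.zero z this)

lemma ne_zero (H : LocalRoof Ω u f z₀ α r ε) {z : ℂ} (hz : z ∈ closure Ω)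
    (hb : z ∈ ball z₀ r) : f z ≠ 0 := by
  intro h0
  have h := H.near z hz hb
  have := H.ε_le
  rw [h0, zero_sub, norm_neg, H.norm_α] at h
  linarith

open Filter Topology in
/-- Locally `Ω` is stable under moving into the cone: `u` increases along such directions, so
a segment starting in `Ω` cannot reach the zero set `∂Ω` of `u`. -/
lemma coneAt_subset (H : LocalRoof Ω u f z₀ α r ε) {z : ℂ} (hz : z ∈ Ω) (hzb : z ∈ ball z₀ r) :
    coneAt α z₀ r z ⊆ Ω := by
  rintro p ⟨hpb, hp⟩
  set γ : ℝ → ℂ := fun t => z + t * (p - z) with hγ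
  have hγc : Continuous γ := by fun_prop
  have hγb : ∀ t ∈ Icc (0 : ℝ) 1, γ t ∈ ball z₀ r := by
    intro t ht
    have := (convex_ball z₀ r).add_smul_sub_mem hzb hpb ht
    simpa [γ, Complex.real_smul] using this
  -- closedness under limits is clear; the derivative of `u ∘ γ` is positive inside `Ω`
  set S : Set ℝ := {t | γ t ∈ closure Ω ∧ u z ≤ u (γ t)} with hS
  have hSub : Icc (0 : ℝ) 1 ⊆ S := by
    refine IsClosed.Icc_subset_of_forall_mem_nhdsWithin ?_ ?_ ?_
    · have h1 : IsClosed (γ ⁻¹' closure Ω) := isClosed_closure.preimage hγc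
      have h2 : ContinuousOn (u ∘ γ) (γ ⁻¹' closure Ω) :=
        H.cont.comp hγc.continuousOn (fun _ h => h)
      have h3 := h2.preimage_isClosed_of_isClosed h1 (isClosed_Ici (a := u z))
      exact h3.inter isClosed_Icc
    · exact ⟨by simpa [γ] using subset_closure hz, by simp [γ]⟩
    · rintro t ⟨⟨htc, htu⟩, ht0, ht1⟩
      have htΩ : γ t ∈ Ω := H.mem_of_pos htc ((H.pos z hz).trans_le htu)
      have hγd : HasDerivAt γ (p - z) t := by
        have := ((Complex.ofRealCLM.hasDerivAt (x := t)).mul_const (p - z)).const_add z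
        simpa [γ] using this
      have hud := (H.hasFDerivAt _ htΩ).comp_hasDerivAt t hγd
      have hpos : 0 < (Complex.reCLM.comp (ContinuousLinearMap.mul ℝ ℂ (f (γ t)))) (p - z) := by
        have h1 := H.near _ htc (hγb t ⟨ht0, ht1.le⟩)
        have h2 : |((f (γ t) - α) * (p - z)).re| ≤ 1 / 4 * ‖p - z‖ := by
          refine (Complex.abs_re_le_norm _).trans ?_
          rw [norm_mul]
          exact mul_le_mul_of_nonneg_right (h1.trans H.ε_le) (norm_nonneg _)
        have h3 : (f (γ t) * (p - z)).re = ((f (γ t) - α) * (p - z)).re + (α * (p - z)).re := by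
          rw [← Complex.add_re]; ring_nf
        have h4 := (abs_le.1 h2).1
        have h5 := norm_nonneg (p - z)
        change 0 < (f (γ t) * (p - z)).re
        rw [h3]; linarith
      have hsl := (hasDerivAt_iff_tendsto_slope.1 hud).eventually (lt_mem_nhds hpos)
      have hsl' : ∀ᶠ s in 𝓝[>] t, 0 < slope (u ∘ γ) t s :=
        hsl.filter_mono (nhdsWithin_mono _ (fun s (hs : t < s) => hs.ne'))
      have hop : ∀ᶠ s in 𝓝[>] t, γ s ∈ Ω :=
        (hγc.continuousAt.eventually (H.isOpen.mem_nhds htΩ)).filter_mono nhdsWithin_le_nhds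
      filter_upwards [hsl', hop, self_mem_nhdsWithin] with s hs1 hs2 hs3
      have hs3' : 0 < s - t := sub_pos.2 hs3
      refine ⟨subset_closure hs2, htu.trans ?_⟩
      rw [slope_def_field, div_pos_iff_of_pos_right hs3'] at hs1
      exact (sub_pos.1 hs1).le
  obtain ⟨h1, h2⟩ := hSub (right_mem_Icc.2 zero_le_one)
  have e : γ 1 = p := by simp [γ]
  rw [e] at h1 h2
  exact H.mem_of_pos h1 ((H.pos z hz).trans_le h2)

/-- The point `z₀ + (r/2) conj α` lies in all the cones with vertex near `z₀`. -/
lemma center_mem_coneAt (H : LocalRoof Ω u f z₀ α r ε) {z : ℂ} (hz : z ∈ ball z₀ (r / 16)) :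
    z₀ + (r / 2 : ℝ) * (starRingEnd ℂ) α ∈ coneAt α z₀ r z := by
  have hr := H.r_pos
  have hn : ‖((r / 2 : ℝ) : ℂ) * (starRingEnd ℂ) α‖ = r / 2 := by
    rw [norm_mul, RCLike.norm_conj, H.norm_α, Complex.norm_real, Real.norm_of_nonneg (by linarith),
      mul_one]
  have hre : (α * ((r / 2 : ℝ) * (starRingEnd ℂ) α)).re = r / 2 := by
    rw [mul_left_comm, Complex.mul_conj, Complex.normSq_eq_norm_sq, H.norm_α]; simp
  have hd : ‖z₀ - z‖ < r / 16 := by rw [← dist_eq_norm, dist_comm]; exact hz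
  refine ⟨?_, ?_⟩
  · rw [mem_ball, dist_eq_norm, add_sub_cancel_left, hn]; linarith
  · have e : z₀ + (r / 2 : ℝ) * (starRingEnd ℂ) α - z
        = (r / 2 : ℝ) * (starRingEnd ℂ) α + (z₀ - z) := by ring
    rw [e, mul_add, Complex.add_re, hre]
    have h1 := norm_add_le (((r / 2 : ℝ) : ℂ) * (starRingEnd ℂ) α) (z₀ - z)
    have h2 : |(α * (z₀ - z)).re| ≤ ‖z₀ - z‖ := by
      refine (Complex.abs_re_le_norm _).trans ?_
      rw [norm_mul, H.norm_α, one_mul]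
    have h3 := (abs_le.1 h2).1
    linarith

/-! ### The holomorphic completion of the roof function -/

/-- A holomorphic completion `F` of `u` near `z₀`. It is glued from primitives of `f` on cones:
these are convex, and any two of them meet in a convex set containing a common base point. -/
lemma exists_primitive (H : LocalRoof Ω u f z₀ α r ε) :
    ∃ F : ℂ → ℂ, ∀ z ∈ Ω, z ∈ ball z₀ (r / 16) → ∀ p ∈ coneAt α z₀ r z,
      HasDerivAt F (f p) p ∧ (F p).re = u p := by
  classical
  have hr := H.r_pos
  set c : ℂ := z₀ + (r / 2 : ℝ) * (starRingEnd ℂ) α with hc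
  set V : Set ℂ := Ω ∩ ball z₀ (r / 16) with hV
  have hball : ball z₀ (r / 16) ⊆ ball z₀ r := ball_subset_ball (by linarith)
  have hsub : ∀ z ∈ V, coneAt α z₀ r z ⊆ Ω := fun z hz => H.coneAt_subset hz.1 (hball hz.2)
  have hcm : ∀ z ∈ V, c ∈ coneAt α z₀ r z := fun z hz => H.center_mem_coneAt hz.2
  have hloc : ∀ z ∈ V, ∃ g : ℂ → ℂ, g c = u c ∧
      ∀ p ∈ coneAt α z₀ r z, HasDerivAt g (f p) p := by
    intro z hz
    obtain ⟨g, hg⟩ := (convex_coneAt α z₀ r z).exists_forall_hasDerivWithinAt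
      (H.holo.mono (hsub z hz))
    refine ⟨fun p => g p - g c + u c, by simp, fun p hp => ?_⟩
    exact (((hg p hp).hasDerivAt ((isOpen_coneAt α z₀ r z).mem_nhds hp)).sub_const _).add_const _
  choose! g hgc hgd using hloc
  have hagree : ∀ z ∈ V, ∀ w ∈ V, ∀ p ∈ coneAt α z₀ r z, p ∈ coneAt α z₀ r w →
      g z p = g w p := by
    intro z hz w hw p hpz hpw
    have hconv := (convex_coneAt α z₀ r z).inter (convex_coneAt α z₀ r w)
    have hopen := (isOpen_coneAt α z₀ r z).inter (isOpen_coneAt α z₀ r w)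
    refine hopen.eqOn_of_deriv_eq hconv.isPreconnected
      (fun q hq => (hgd z hz q hq.1).differentiableAt.differentiableWithinAt)
      (fun q hq => (hgd w hw q hq.2).differentiableAt.differentiableWithinAt)
      (fun q hq => ?_) (x := c) ⟨hcm z hz, hcm w hw⟩ ?_ ⟨hpz, hpw⟩
    · rw [(hgd z hz q hq.1).deriv, (hgd w hw q hq.2).deriv]
    · rw [hgc z hz, hgc w hw]
  have hre : ∀ z ∈ V, ∀ p ∈ coneAt α z₀ r z, (g z p).re = u p := by
    intro z hz p hp
    have hd : ∀ q ∈ coneAt α z₀ r z, HasFDerivAt (fun q => (g z q).re - u q)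
        (0 : ℂ →L[ℝ] ℝ) q := by
      intro q hq
      have h1 : HasFDerivAt (fun q => (g z q).re) _ q :=
        Complex.reCLM.hasFDerivAt.comp q ((hgd z hz q hq).hasFDerivAt.restrictScalars ℝ)
      refine (h1.fun_sub (H.hasFDerivAt q (hsub z hz hq))).congr_fderiv ?_
      ext x
      simp only [ContinuousLinearMap.comp_apply, sub_apply,
        ContinuousLinearMap.coe_restrictScalars', ContinuousLinearMap.toSpanSingleton_apply,
        smul_eq_mul, ContinuousLinearMap.mul_apply', zero_apply, mul_comm x,
        sub_self]
    have := (convex_coneAt α z₀ r z).is_const_of_fderivWithin_eq_zero (𝕜 := ℝ)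
      (fun q hq => (hd q hq).differentiableAt.differentiableWithinAt)
      (fun q hq => by
        rw [fderivWithin_of_isOpen (isOpen_coneAt α z₀ r z) hq, (hd q hq).fderiv]) hp (hcm z hz)
    simp only [hgc z hz, Complex.ofReal_re, sub_self] at this
    linarith
  refine ⟨fun p => if h : ∃ z ∈ V, p ∈ coneAt α z₀ r z then g h.choose p else 0, ?_⟩
  intro z hzΩ hzb
  have hz : z ∈ V := ⟨hzΩ, hzb⟩
  have heq : ∀ p ∈ coneAt α z₀ r z, (if h : ∃ z ∈ V, p ∈ coneAt α z₀ r z then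
      g h.choose p else 0) = g z p := by
    intro p hp
    have h : ∃ z ∈ V, p ∈ coneAt α z₀ r z := ⟨z, hz, hp⟩
    rw [dif_pos h]
    exact hagree _ h.choose_spec.1 _ hz p h.choose_spec.2 hp
  intro p hp
  refine ⟨(hgd z hz p hp).congr_of_eventuallyEq ?_, ?_⟩
  · exact Filter.eventually_of_mem ((isOpen_coneAt α z₀ r z).mem_nhds hp) heq
  · simp only [heq p hp]; exact hre z hz p hp

open Filter Topology in
/-- Shifting the vertex slightly backwards, a point of `Ω` and the part of the disc in the closed
cone above it lie in one cone with vertex in `Ω`. -/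
lemma exists_vertex (H : LocalRoof Ω u f z₀ α r ε) {z : ℂ} (hz : z ∈ Ω)
    (hzb : z ∈ ball z₀ (r / 16)) :
    ∃ z' ∈ Ω, z' ∈ ball z₀ (r / 16) ∧
      ∀ p ∈ ball z₀ r, ‖p - z‖ ≤ 2 * (α * (p - z)).re → p ∈ coneAt α z₀ r z' := by
  have hc : Tendsto (fun s : ℝ => z - s * (starRingEnd ℂ) α) (𝓝[>] 0) (𝓝 z) := by
    have : Continuous (fun s : ℝ => z - s * (starRingEnd ℂ) α) := by fun_prop
    have h := this.tendsto 0
    simp only [Complex.ofReal_zero, zero_mul, sub_zero] at h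
    exact h.mono_left nhdsWithin_le_nhds
  have h1 := hc.eventually ((H.isOpen.inter isOpen_ball).mem_nhds ⟨hz, hzb⟩)
  obtain ⟨s, ⟨hs1, hs2⟩, hs3⟩ := (h1.and self_mem_nhdsWithin).exists
  exact ⟨_, hs1, hs2, fun p hp h => coneAt_shift H.norm_α hs3 hp h⟩

/-- The completion `F` of `u` is close to the rotation by `α`: two points of `Ω` near `z₀` are
joined inside `Ω` through a third one lying in the cones above both of them, at distance
comparable to theirs. -/
lemma exists_completion (H : LocalRoof Ω u f z₀ α r ε) :
    ∃ F : ℂ → ℂ, (∀ z ∈ Ω, z ∈ ball z₀ (r / 16) → HasDerivAt F (f z) z ∧ (F z).re = u z) ∧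
      ∀ z ∈ Ω ∩ ball z₀ (r / 16), ∀ w ∈ Ω ∩ ball z₀ (r / 16),
        ‖F z - F w - α * (z - w)‖ ≤ 5 * ε * ‖z - w‖ := by
  have hr := H.r_pos
  have hball : ball z₀ (r / 16) ⊆ ball z₀ r := ball_subset_ball (by linarith)
  obtain ⟨F, hF⟩ := H.exists_primitive
  refine ⟨F, ?_, ?_⟩
  · intro z hz hzb
    obtain ⟨z', h1, h2, h3⟩ := H.exists_vertex hz hzb
    exact hF z' h1 h2 z (h3 z (hball hzb) (by simp))
  have hup : ∀ z ∈ Ω ∩ ball z₀ (r / 16), ∀ p ∈ ball z₀ r, ‖p - z‖ ≤ 2 * (α * (p - z)).re →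
      ‖F p - F z - α * (p - z)‖ ≤ ε * ‖p - z‖ := by
    intro z hz p hp h
    obtain ⟨z', h1, h2, h3⟩ := H.exists_vertex hz.1 hz.2
    have hd : ∀ q ∈ coneAt α z₀ r z', HasDerivWithinAt (fun q => F q - α * q) (f q - α)
        (coneAt α z₀ r z') q := fun q hq =>
      ((hF z' h1 h2 q hq).1.sub (by simpa using (hasDerivAt_id q).const_mul α)).hasDerivWithinAt
    have := (convex_coneAt α z₀ r z').norm_image_sub_le_of_norm_hasDerivWithin_le hd
      (fun q hq => H.near q (subset_closure (H.coneAt_subset h1 (hball h2) hq)) hq.1)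
      (h3 z (hball hz.2) (by simp)) (h3 p hp h)
    have e : F p - F z - α * (p - z) = (F p - α * p) - (F z - α * z) := by ring
    rw [e]
    exact this
  intro z hz w hw
  set d := ‖z - w‖ with hd
  have hd0 : 0 ≤ d := norm_nonneg _
  have hz2 : ‖z - z₀‖ < r / 16 := by rw [← dist_eq_norm]; exact hz.2
  have hw2 : ‖w - z₀‖ < r / 16 := by rw [← dist_eq_norm]; exact hw.2
  have hdr : d < r / 8 := by
    have : z - w = (z - z₀) - (w - z₀) := by ring
    have := norm_sub_le (z - z₀) (w - z₀)
    rw [sub_sub_sub_cancel_right] at this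
    linarith
  have hn : ‖((2 * d : ℝ) : ℂ) * (starRingEnd ℂ) α‖ = 2 * d := by
    rw [norm_mul, RCLike.norm_conj, H.norm_α, Complex.norm_real, Real.norm_of_nonneg (by linarith),
      mul_one]
  have hre : (α * ((2 * d : ℝ) * (starRingEnd ℂ) α)).re = 2 * d := by
    rw [mul_left_comm, Complex.mul_conj, Complex.normSq_eq_norm_sq, H.norm_α]; simp
  set p : ℂ := (z + w) / 2 + (2 * d : ℝ) * (starRingEnd ℂ) α with hp
  have aux : ∀ v : ℂ, ‖v‖ ≤ d / 2 →
      ‖v + (2 * d : ℝ) * (starRingEnd ℂ) α‖ ≤ 5 / 2 * d ∧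
      5 / 2 * d ≤ 2 * (α * (v + (2 * d : ℝ) * (starRingEnd ℂ) α)).re := by
    intro v hv
    have h1 := norm_add_le v ((2 * d : ℝ) * (starRingEnd ℂ) α)
    have h2 : |(α * v).re| ≤ ‖v‖ := by
      refine (Complex.abs_re_le_norm _).trans ?_
      rw [norm_mul, H.norm_α, one_mul]
    have h3 := (abs_le.1 h2).1
    rw [mul_add, Complex.add_re, hre]
    constructor <;> linarith
  have ez : p - z = (w - z) / 2 + (2 * d : ℝ) * (starRingEnd ℂ) α := by rw [hp]; ring
  have ew : p - w = (z - w) / 2 + (2 * d : ℝ) * (starRingEnd ℂ) α := by rw [hp]; ring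
  obtain ⟨hz3, hz4⟩ := aux ((w - z) / 2) (by rw [norm_div, norm_sub_rev]; simp [hd])
  obtain ⟨hw3, hw4⟩ := aux ((z - w) / 2) (by rw [norm_div]; simp [hd])
  rw [← ez] at hz3 hz4
  rw [← ew] at hw3 hw4
  have hpb : p ∈ ball z₀ r := by
    rw [mem_ball, dist_eq_norm]
    have : p - z₀ = (p - z) + (z - z₀) := by ring
    have := norm_add_le (p - z) (z - z₀)
    rw [sub_add_sub_cancel] at this
    linarith
  have b1 := hup z hz p hpb (hz3.trans hz4)
  have b2 := hup w hw p hpb (hw3.trans hw4)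
  have hε : 0 ≤ ε := (norm_nonneg _).trans (H.near z₀ H.mem.1 (mem_ball_self hr))
  have e : F z - F w - α * (z - w)
      = (F p - F w - α * (p - w)) - (F p - F z - α * (p - z)) := by ring
  rw [e]
  refine (norm_sub_le _ _).trans ?_
  have := mul_le_mul_of_nonneg_left hz3 hε
  have := mul_le_mul_of_nonneg_left hw3 hε
  linarith

open scoped NNReal in
/-- If `ε` is small enough, the holomorphic completion of `u` extends to a homeomorphism of the
plane. -/
lemma exists_homeomorph (H : LocalRoof Ω u f z₀ α r ε) (A : ℂ ≃L[ℝ] ℂ) (hA : ∀ z, A z = α * z)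
    (κ : ℝ≥0) (hκ : lipschitzExtensionConstant ℂ * κ < ‖(A.symm : ℂ →L[ℝ] ℂ)‖₊⁻¹)
    (hε : 5 * ε ≤ κ) :
    ∃ Φ : ℂ ≃ₜ ℂ, ∀ z ∈ Ω, z ∈ ball z₀ (r / 16) → HasDerivAt Φ (f z) z ∧ (Φ z).re = u z := by
  obtain ⟨F, hF, hFa⟩ := H.exists_completion
  have happ : ApproximatesLinearOn F (A : ℂ →L[ℝ] ℂ) (Ω ∩ ball z₀ (r / 16)) κ := by
    intro z hz w hw
    have := hFa z hz w hw
    refine (le_of_eq_of_le ?_ this).trans (mul_le_mul_of_nonneg_right hε (norm_nonneg _))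
    simp [hA]
  obtain ⟨Φ, hΦ⟩ := happ.exists_homeomorph_extension (Or.inr hκ)
  refine ⟨Φ, fun z hz hzb => ?_⟩
  have hop := (H.isOpen.inter isOpen_ball).mem_nhds ⟨hz, hzb⟩
  obtain ⟨h1, h2⟩ := hF z hz hzb
  refine ⟨h1.congr_of_eventuallyEq (Filter.eventually_of_mem hop fun w hw => (hΦ hw).symm), ?_⟩
  rw [← hΦ ⟨hz, hzb⟩, h2]

lemma re_homeomorph (H : LocalRoof Ω u f z₀ α r ε) {Φ : ℂ ≃ₜ ℂ}
    (hΦ : ∀ z ∈ Ω, z ∈ ball z₀ (r / 16) → HasDerivAt Φ (f z) z ∧ (Φ z).re = u z)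
    {z : ℂ} (hz : z ∈ closure Ω) (hzb : z ∈ ball z₀ (r / 16)) : (Φ z).re = u z := by
  have hmem : z ∈ closure (Ω ∩ ball z₀ (r / 16)) :=
    inter_comm (ball z₀ (r / 16)) Ω ▸ isOpen_ball.inter_closure ⟨hzb, hz⟩
  have hsub : closure (Ω ∩ ball z₀ (r / 16)) ⊆ closure Ω := closure_mono inter_subset_left
  have h1 : ContinuousOn (fun z => (Φ z).re) (closure (Ω ∩ ball z₀ (r / 16))) :=
    (Complex.continuous_re.comp Φ.continuous).continuousOn
  have h2 : EqOn (fun z => (Φ z).re) u (Ω ∩ ball z₀ (r / 16)) :=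
    fun w hw => (hΦ w hw.1 hw.2).2
  exact h2.of_subset_closure h1 (H.cont.mono hsub) subset_closure subset_rfl hmem

/-- The homeomorphism `Φ` straightens `∂Ω` near `z₀`, mapping `Ω` to the right half-plane. -/
lemma exists_ball (H : LocalRoof Ω u f z₀ α r ε) {Φ : ℂ ≃ₜ ℂ}
    (hΦ : ∀ z ∈ Ω, z ∈ ball z₀ (r / 16) → HasDerivAt Φ (f z) z ∧ (Φ z).re = u z) :
    ∃ ρ > 0, (∀ w ∈ ball (Φ z₀) ρ, Φ.symm w ∈ ball z₀ (r / 16)) ∧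
      (∀ w ∈ ball (Φ z₀) ρ, 0 < w.re → Φ.symm w ∈ Ω) ∧
      (∀ w ∈ ball (Φ z₀) ρ, w.re = 0 → Φ.symm w ∈ frontier Ω) := by
  have hr := H.r_pos
  have hz₀ : z₀ ∈ ball z₀ (r / 16) := mem_ball_self (by linarith)
  have hre0 : (Φ z₀).re = 0 := by rw [H.re_homeomorph hΦ H.mem.1 hz₀, H.zero _ H.mem]
  obtain ⟨ρ, hρ, hsub⟩ := Metric.isOpen_iff.1 (isOpen_ball.preimage Φ.symm.continuous) (Φ z₀)
    (show Φ.symm (Φ z₀) ∈ ball z₀ (r / 16) by simpa using hz₀)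
  have hsub' : ∀ w ∈ ball (Φ z₀) ρ, Φ.symm w ∈ ball z₀ (r / 16) := fun w hw => hsub hw
  set P : Set ℂ := ball (Φ z₀) ρ ∩ {w | 0 < w.re} with hP
  have hPconv : Convex ℝ P := (convex_ball _ _).inter (convex_halfSpace_re_gt 0)
  -- `Φ.symm ⁻¹' Ω` is relatively open and closed in the half-disc `P`
  have hPΩ : P ⊆ Φ.symm ⁻¹' Ω := by
    refine hPconv.isPreconnected.subset_of_closure_inter_subset
      (H.isOpen.preimage Φ.symm.continuous) ?_ ?_
    · have hop : IsOpen (Φ ⁻¹' ball (Φ z₀) ρ) := isOpen_ball.preimage Φ.continuous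
      obtain ⟨z, ⟨hz1, hz2⟩, hz3⟩ := mem_closure_iff.1 H.mem.1 _ (hop.inter isOpen_ball)
        ⟨mem_ball_self hρ, hz₀⟩
      refine ⟨Φ z, ⟨hz1, ?_⟩, by simpa using hz3⟩
      change 0 < (Φ z).re
      rw [(hΦ z hz3 hz2).2]; exact H.pos z hz3
    · rintro w ⟨hw1, hw2, hw3⟩
      have hcl : Φ.symm w ∈ closure Ω := Φ.symm.continuous.closure_preimage_subset Ω hw1
      have h := H.re_homeomorph hΦ hcl (hsub' w hw2)
      rw [Φ.apply_symm_apply] at h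
      exact H.mem_of_pos hcl (h ▸ hw3)
  refine ⟨ρ, hρ, hsub', fun w hw h => hPΩ ⟨hw, h⟩, fun w hw h => ?_⟩
  have hwcl : w ∈ closure P := by
    have h1 : w ∈ closure {w : ℂ | 0 < w.re} := by
      rw [Complex.closure_setOfPred_lt_re]; exact h.ge
    have := isOpen_ball.inter_closure (s := ball (Φ z₀) ρ) (t := {w : ℂ | 0 < w.re})
    exact this ⟨hw, h1⟩
  have hcl : Φ.symm w ∈ closure Ω :=
    Φ.symm.continuous.closure_preimage_subset Ω (closure_mono hPΩ hwcl)
  refine ⟨hcl, ?_⟩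
  rw [H.isOpen.interior_eq]
  intro hΩ
  have h1 := (hΦ _ hΩ (hsub' w hw)).2
  rw [Φ.apply_symm_apply, h] at h1
  exact (H.pos _ hΩ).ne h1

/-! ### Reflection across the boundary -/

open Complex Filter Topology in
/-- Schwarz reflection: the inverse of `Φ`, a priori defined and holomorphic only on the right
half-disc, continues to a holomorphic map `P` on the whole disc. Its derivative `1 / (f ∘ Φ⁻¹)` is
unimodular on the diameter, hence continues by `w ↦ conj (f (Φ⁻¹ (-conj w)))`. -/
lemma exists_continuation (H : LocalRoof Ω u f z₀ α r ε) {Φ : ℂ ≃ₜ ℂ}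
    (hΦ : ∀ z ∈ Ω, z ∈ ball z₀ (r / 16) → HasDerivAt Φ (f z) z ∧ (Φ z).re = u z) {ρ : ℝ}
    (hρ : 0 < ρ) (hb : ∀ w ∈ ball (Φ z₀) ρ, Φ.symm w ∈ ball z₀ (r / 16))
    (hin : ∀ w ∈ ball (Φ z₀) ρ, 0 < w.re → Φ.symm w ∈ Ω)
    (hfr : ∀ w ∈ ball (Φ z₀) ρ, w.re = 0 → Φ.symm w ∈ frontier Ω) :
    ∃ P : ℂ → ℂ, DifferentiableOn ℂ P (ball (Φ z₀) ρ) ∧ (∀ w ∈ ball (Φ z₀) ρ, deriv P w ≠ 0) ∧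
      ∀ w ∈ ball (Φ z₀) ρ, w.re = 0 → P w = Φ.symm w := by
  have hr := H.r_pos
  have hball : ball z₀ (r / 16) ⊆ ball z₀ r := ball_subset_ball (by linarith)
  have hre0 : (Φ z₀).re = 0 := by
    rw [H.re_homeomorph hΦ H.mem.1 (mem_ball_self (by linarith)), H.zero _ H.mem]
  set D := ball (Φ z₀) ρ with hD
  have hrefl : ∀ w ∈ D, -(starRingEnd ℂ) w ∈ D := by
    intro w hw
    have h0 : -(starRingEnd ℂ) (Φ z₀) = Φ z₀ := by
      apply Complex.ext <;> simp [hre0]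
    rw [hD, mem_ball, dist_eq_norm] at hw ⊢
    rw [← h0, neg_sub_neg, ← map_sub, RCLike.norm_conj, norm_sub_rev]
    exact hw
  have hcl : ∀ w ∈ D, 0 ≤ w.re → Φ.symm w ∈ closure Ω := by
    intro w hw h
    rcases h.eq_or_lt with h | h
    · exact (hfr w hw h.symm).1
    · exact subset_closure (hin w hw h)
  have hne : ∀ w ∈ D, 0 ≤ w.re → f (Φ.symm w) ≠ 0 := fun w hw h =>
    H.ne_zero (hcl w hw h) (hball (hb w hw))
  have hcont : ContinuousOn (fun w => f (Φ.symm w)) (D ∩ {w | 0 ≤ w.re}) :=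
    H.contf.comp Φ.symm.continuous.continuousOn (fun w hw => hcl w hw.1 hw.2)
  have hSd : ∀ w ∈ D, 0 < w.re → HasDerivAt Φ.symm (f (Φ.symm w))⁻¹ w := by
    intro w hw h
    exact HasDerivAt.of_local_left_inverse Φ.symm.continuous.continuousAt
      (hΦ _ (hin w hw h) (hb w hw)).1 (hne w hw h.le)
      (Eventually.of_forall fun y => Φ.apply_symm_apply y)
  have hfd : ∀ w ∈ D, 0 < w.re → DifferentiableAt ℂ (fun w => f (Φ.symm w)) w := by
    intro w hw h
    have h1 := (H.holo _ (hin w hw h)).differentiableAt (H.isOpen.mem_nhds (hin w hw h))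
    exact h1.comp w (hSd w hw h).differentiableAt
  set g : ℂ → ℂ := fun w => if 0 ≤ w.re then (f (Φ.symm w))⁻¹
    else (starRingEnd ℂ) (f (Φ.symm (-(starRingEnd ℂ) w))) with hg
  have hgc : ContinuousOn g D := by
    refine ContinuousOn.if ?_ ?_ ?_
    · rintro w ⟨hw, hw0⟩
      rw [Complex.frontier_setOfPred_le_re] at hw0
      have hw0 : w.re = 0 := hw0
      have e : -(starRingEnd ℂ) w = w := by apply Complex.ext <;> simp [hw0]
      rw [e, Complex.inv_def, Complex.normSq_eq_norm_sq, H.unit _ (hfr w hw hw0)]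
      simp
    · have : closure {w : ℂ | 0 ≤ w.re} = {w | 0 ≤ w.re} :=
        (isClosed_le continuous_const Complex.continuous_re).closure_eq
      rw [this]
      exact hcont.inv₀ (fun w hw => hne w hw.1 hw.2)
    · have : closure {w : ℂ | ¬ 0 ≤ w.re} = {w | w.re ≤ 0} := by
        simp only [not_le]; exact Complex.closure_setOfPred_re_lt 0
      rw [this]
      refine Complex.continuous_conj.comp_continuousOn
        (hcont.comp (Complex.continuous_conj.neg).continuousOn ?_)
      rintro w ⟨hw, hw0⟩
      refine ⟨hrefl w hw, ?_⟩
      have hw0 : w.re ≤ 0 := hw0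
      change 0 ≤ (-(starRingEnd ℂ) w).re
      simpa using hw0
  have hgd : ∀ w ∈ D, w.re ≠ 0 → DifferentiableAt ℂ g w := by
    intro w hw h0
    rcases h0.lt_or_gt with h | h
    · have hev : g =ᶠ[𝓝 w] fun w => (starRingEnd ℂ) (f (Φ.symm (-(starRingEnd ℂ) w))) := by
        filter_upwards [(isOpen_lt Complex.continuous_re continuous_const).mem_nhds h] with v hv
        exact if_neg (not_le.2 hv)
      refine DifferentiableAt.congr_of_eventuallyEq ?_ hev
      have h1 := hfd _ (hrefl w hw) (by simpa using h)
      have h2 : DifferentiableAt ℂ (fun v => f (Φ.symm (-v))) ((starRingEnd ℂ) w) :=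
        h1.comp ((starRingEnd ℂ) w) differentiableAt_id.neg
      have h3 := h2.hasDerivAt.conj_conj.differentiableAt
      simpa [Function.comp_def] using h3
    · have hev : g =ᶠ[𝓝 w] fun w => (f (Φ.symm w))⁻¹ := by
        filter_upwards [(isOpen_lt continuous_const Complex.continuous_re).mem_nhds h] with v hv
        exact if_pos (le_of_lt hv)
      exact ((hfd w hw h).inv (hne w hw h.le)).congr_of_eventuallyEq hev
  have hg0 : ∀ w ∈ D, g w ≠ 0 := by
    intro w hw
    by_cases h : 0 ≤ w.re
    · simp only [hg, if_pos h]; exact inv_ne_zero (hne w hw h)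
    · simp only [hg, if_neg h]
      rw [map_ne_zero]
      exact hne _ (hrefl w hw) (by simpa using (not_le.1 h).le)
  set w₁ : ℂ := Φ z₀ + (ρ / 2 : ℝ) with hw₁
  have hw₁D : w₁ ∈ D ∩ {w : ℂ | 0 < w.re} := by
    constructor
    · rw [hD, mem_ball, dist_eq_norm, hw₁, add_sub_cancel_left, Complex.norm_real,
        Real.norm_of_nonneg (by linarith)]
      linarith
    · change 0 < w₁.re
      rw [hw₁, Complex.add_re, hre0, Complex.ofReal_re]; linarith
  obtain ⟨P, hP1, hP⟩ := (differentiableOn_ball_of_continuousOn_of_re_ne_zero hgc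
    hgd).isExactOn_ball.with_val_at w₁ (Φ.symm w₁)
  refine ⟨P, fun w hw => (hP w hw).differentiableAt.differentiableWithinAt,
    fun w hw => (hP w hw).deriv ▸ hg0 w hw, ?_⟩
  have hhalf : EqOn P Φ.symm (D ∩ {w : ℂ | 0 < w.re}) := by
    have hop : IsOpen (D ∩ {w : ℂ | 0 < w.re}) :=
      isOpen_ball.inter (isOpen_lt continuous_const Complex.continuous_re)
    have hconv : Convex ℝ (D ∩ {w : ℂ | 0 < w.re}) :=
      (convex_ball _ _).inter (convex_halfSpace_re_gt 0)
    refine hop.eqOn_of_deriv_eq hconv.isPreconnected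
      (fun w hw => (hP w hw.1).differentiableAt.differentiableWithinAt)
      (fun w hw => (hSd w hw.1 hw.2).differentiableAt.differentiableWithinAt)
      (fun w hw => ?_) hw₁D hP1
    rw [(hP w hw.1).deriv, (hSd w hw.1 hw.2).deriv]
    exact if_pos (le_of_lt hw.2)
  intro w hw h0
  have h1 : ContinuousOn P D := fun w hw => (hP w hw).continuousAt.continuousWithinAt
  have hwcl : w ∈ closure (D ∩ {w : ℂ | 0 < w.re}) := by
    have h1 : w ∈ closure {w : ℂ | 0 < w.re} := by
      rw [Complex.closure_setOfPred_lt_re]; exact h0.ge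
    exact isOpen_ball.inter_closure ⟨hw, h1⟩
  exact hhalf.of_subset_closure (h1.mono inter_subset_left) Φ.symm.continuous.continuousOn
    (t := D ∩ closure (D ∩ {w : ℂ | 0 < w.re})) (fun w hw => ⟨hw.1, subset_closure hw⟩)
    inter_subset_right ⟨hw, hwcl⟩

open Filter Topology in
/-- The inverse of the continuation of `Φ⁻¹` is a holomorphic extension of `Φ` across `∂Ω`; its
real part is an analytic defining function of `∂Ω`. -/
lemma exists_defining_function (H : LocalRoof Ω u f z₀ α r ε) {Φ : ℂ ≃ₜ ℂ}
    (hΦ : ∀ z ∈ Ω, z ∈ ball z₀ (r / 16) → HasDerivAt Φ (f z) z ∧ (Φ z).re = u z) :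
    ∃ (U : Set ℂ) (ψ : ℂ → ℝ), IsOpen U ∧ z₀ ∈ U ∧ AnalyticOnNhd ℝ ψ U ∧
      (∀ z ∈ U, fderiv ℝ ψ z ≠ 0) ∧ frontier Ω ∩ U = {z ∈ U | ψ z = 0} := by
  have hr := H.r_pos
  have hz₀ : z₀ ∈ ball z₀ (r / 16) := mem_ball_self (by linarith)
  have hre : ∀ z ∈ frontier Ω, z ∈ ball z₀ (r / 16) → (Φ z).re = 0 := fun z hz hzb => by
    rw [H.re_homeomorph hΦ hz.1 hzb, H.zero _ hz]
  obtain ⟨ρ, hρ, hb, hin, hfr⟩ := H.exists_ball hΦ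
  obtain ⟨P, hPd, hP0, hPS⟩ := H.exists_continuation hΦ hρ hb hin hfr
  set D := ball (Φ z₀) ρ with hD
  have hp₀ : Φ z₀ ∈ D := mem_ball_self hρ
  have hPan : ∀ w ∈ D, AnalyticAt ℂ P w := hPd.analyticOnNhd isOpen_ball
  have hst := (hPan _ hp₀).hasStrictDerivAt.hasStrictFDerivAt_equiv (hP0 _ hp₀)
  set e := hst.toOpenPartialHomeomorph P with he
  have hcoe : ∀ w, e w = P w := fun w => rfl
  have hsrc : Φ z₀ ∈ e.source := hst.mem_toOpenPartialHomeomorph_source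
  have hPz : P (Φ z₀) = z₀ := by rw [hPS _ hp₀ (hre _ H.mem hz₀), Φ.symm_apply_apply]
  set U₁ : Set ℂ := e.target ∩ e.symm ⁻¹' D with hU₁
  have hU₁o : IsOpen U₁ := e.isOpen_inter_preimage_symm isOpen_ball
  have hEd : ∀ z ∈ U₁, HasDerivAt e.symm (deriv P (e.symm z))⁻¹ z := fun z hz =>
    e.hasDerivAt_symm hz.1 (hP0 _ hz.2) (hPan _ hz.2).differentiableAt.hasDerivAt
  have hEan : AnalyticOnNhd ℂ e.symm U₁ := DifferentiableOn.analyticOnNhd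
    (fun z hz => (hEd z hz).differentiableAt.differentiableWithinAt) hU₁o
  set U : Set ℂ := U₁ ∩ (ball z₀ (r / 16) ∩ Φ ⁻¹' (e.source ∩ D)) with hU
  have hz₀U : z₀ ∈ U := by
    have h1 : z₀ ∈ e.target := by
      have := e.map_source hsrc
      rwa [hcoe, hPz] at this
    have h2 : e.symm z₀ = Φ z₀ := by
      have := e.left_inv hsrc
      rwa [hcoe, hPz] at this
    exact ⟨⟨h1, by rw [mem_preimage, h2]; exact hp₀⟩, hz₀, hsrc, hp₀⟩
  refine ⟨U, fun z => (e.symm z).re, ?_, hz₀U, ?_, ?_, ?_⟩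
  · exact hU₁o.inter (isOpen_ball.inter ((e.open_source.inter isOpen_ball).preimage Φ.continuous))
  · intro z hz
    exact (Complex.reCLM.analyticAt _).comp (hEan z hz.1).restrictScalars
  · intro z hz h0
    have h1 : HasFDerivAt (fun z => (e.symm z).re) _ z :=
      Complex.reCLM.hasFDerivAt.comp z ((hEd z hz.1).hasFDerivAt.restrictScalars ℝ)
    have hne := hP0 _ hz.1.2
    -- test the differential on the preimage of `1` under multiplication by the derivative
    have h2 := DFunLike.congr_fun (h1.fderiv.symm.trans h0) (deriv P (e.symm z))
    simp [hne] at h2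
  · ext z
    constructor
    · rintro ⟨hzf, hzU⟩
      refine ⟨hzU, ?_⟩
      obtain ⟨-, hzb, hzs, hzD⟩ := hzU
      have h0 := hre z hzf hzb
      have h1 : P (Φ z) = z := by rw [hPS _ hzD h0, Φ.symm_apply_apply]
      have h2 := e.left_inv hzs
      rw [hcoe, h1] at h2
      change (e.symm z).re = 0
      rw [h2, h0]
    · rintro ⟨hzU, hz0⟩
      refine ⟨?_, hzU⟩
      have h1 := e.right_inv hzU.1.1
      rw [hcoe, hPS _ hzU.1.2 hz0] at h1
      exact h1 ▸ hfr _ hzU.1.2 hz0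

end LocalRoof

/-- Lemma 2.2: the boundary of a planar exceptional domain with a classical roof function
is locally real-analytic: near each boundary point, `∂Ω` is the zero set of a
real-analytic function with nonvanishing gradient. -/
theorem boundary_locally_real_analytic (Ω : Set ℂ) (hΩo : IsOpen Ω)
    (hΩc : IsConnected Ω) (hΩne : Ω ≠ univ)
    (u : ℂ → ℝ) (hu : IsRoofFunctionC Ω u) :
    ∀ z₀ ∈ frontier Ω, ∃ (U : Set ℂ) (ψ : ℂ → ℝ),
      IsOpen U ∧ z₀ ∈ U ∧ AnalyticOnNhd ℝ ψ U ∧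
      (∀ z ∈ U, fderiv ℝ ψ z ≠ 0) ∧
      frontier Ω ∩ U = {z ∈ U | ψ z = 0} := by
  intro z₀ hz₀
  obtain ⟨hcont, hharm, hpos, hzero, G, hGc, hGf, hGn⟩ := hu
  set f : ℂ → ℂ := fun z => (G z 1 : ℂ) - Complex.I * G z Complex.I with hf
  have hfc : ContinuousOn f (closure Ω) := by
    have h1 : ∀ v : ℂ, ContinuousOn (fun z => (G z v : ℂ)) (closure Ω) := fun v =>
      Complex.continuous_ofReal.comp_continuousOn (hGc.clm_apply continuousOn_const)
    exact (h1 1).sub (continuousOn_const.mul (h1 Complex.I))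
  have hunit : ∀ z ∈ frontier Ω, ‖f z‖ = 1 := fun z hz => by
    rw [← hGn z hz]; exact norm_eq_norm_functional (G z)
  have hα : ‖f z₀‖ = 1 := hunit z₀ hz₀
  have hα0 : f z₀ ≠ 0 := norm_ne_zero_iff.1 (by rw [hα]; exact one_ne_zero)
  let A : ℂ ≃L[ℝ] ℂ :=
    (ContinuousLinearEquiv.unitsEquivAut ℂ (Units.mk0 _ hα0)).restrictScalars ℝ
  have hA : ∀ z, A z = f z₀ * z := fun z => mul_comm _ _
  -- the closeness of `f` to `f z₀` required to extend the completion of `u` to the plane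
  obtain ⟨κ, hκ0, hκ⟩ : ∃ κ : NNReal, 0 < κ ∧
      lipschitzExtensionConstant ℂ * κ < ‖(A.symm : ℂ →L[ℝ] ℂ)‖₊⁻¹ := by
    have hK := lipschitzExtensionConstant_pos ℂ
    have hN : 0 < ‖(A.symm : ℂ →L[ℝ] ℂ)‖₊⁻¹ := inv_pos.2 A.nnnorm_symm_pos
    obtain ⟨κ, h1, h2⟩ := exists_between (div_pos hN hK)
    exact ⟨κ, h1, by rwa [mul_comm, ← lt_div_iff₀ hK]⟩
  set ε : ℝ := min (1 / 4) (κ / 5) with hε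
  have hε0 : 0 < ε := lt_min (by norm_num) (div_pos hκ0 (by norm_num))
  obtain ⟨r, hr, hrf⟩ := Metric.continuousOn_iff.1 hfc z₀ hz₀.1 ε hε0
  have H : LocalRoof Ω u f z₀ (f z₀) r ε :=
    { isOpen := hΩo
      cont := hcont
      pos := hpos
      zero := hzero
      mem := hz₀
      r_pos := hr
      norm_α := hα
      hasFDerivAt := fun z hz => by
        have h1 := ((hharm.1 z hz).differentiableAt (by norm_num)).hasFDerivAt
        rw [← hGf z hz] at h1
        rw [eq_re_mul (G z)] at h1
        exact h1
      holo := (hharm.differentiableOn_partial hΩo).congr fun z hz => by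
        simp only [hf, hGf z hz]
      contf := hfc
      near := fun z hz hzb => by
        rw [← dist_eq_norm]; exact (hrf z hz hzb).le
      ε_le := min_le_left _ _
      unit := hunit }
  obtain ⟨Φ, hΦ⟩ := H.exists_homeomorph A hA κ hκ (by
    have : ε ≤ κ / 5 := min_le_right _ _
    linarith)
  exact H.exists_defining_function hΦ
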